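/- Let α > 1, r = (1/2)(1 - 1/α), s ≥ 2, and let a₁,…,a_k be positive integers with a_{2i-1} + a_{2i} = s for each i. Set ā = ⌊s/2⌋, b̄ = s - ā, and n''_* = ⌊-log_r ā⌋ + 1. If the even integer k satisfies k ≥ max{ ⌈2(1-r+r^{n''_*})^{ā-1}[b̄(1-r+r^{n''_*}) + ā] / ((1-r)^{ā-1}(1-r^{n''_*})^{b̄-1}[b̄(1-r)+ā(1-r^{n''_*})]) + 2⌉·((1-r)/r)^{ā}, 2((1-r)/r)^{ā+1}, 2(1/(1-r))^{s-1} + 2 }, then [0, k/2] = { ∑_{i=1}^{k/2} x_{2i-1}^{a_{2i-1}} x_{2i}^{a_{2i}} : x₁,…,x_k ∈ C_α }. -/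

import Mathlib

/-- The `n`-th stage of the Cantor construction with ratio `r`:
`C_0 = [0,1]`, `C_{n+1} = f₀(C_n) ∪ f₁(C_n)` with `f₀ x = r x`, `f₁ x = r x + (1-r)`. -/
def preCantorR (r : ℝ) : ℕ → Set ℝ
  | 0 => Set.Icc 0 1
  | n + 1 =>
      (fun x => r * x) '' preCantorR r n ∪ (fun x => r * x + (1 - r)) '' preCantorR r n

/-- The generalized Cantor set with contraction ratio `r`. -/
def cantorSetR (r : ℝ) : Set ℝ := ⋂ n, preCantorR r n

/-- The classical Cantor ternary set. -/
def cantorTernary : Set ℝ := cantorSetR (1/3)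

/-- `pairSumVec a m x = ∑_{i=1}^{m} x_{2i-1}^{a_{2i-1}} x_{2i}^{a_{2i}}` (0-indexed),
i.e. the non-diagonal form `f_{k,\vec a}` with `k = 2m`. -/
def pairSumVec (a : ℕ → ℕ) (m : ℕ) (x : ℕ → ℝ) : ℝ :=
  ∑ i ∈ Finset.range m, x (2 * i) ^ a (2 * i) * x (2 * i + 1) ^ a (2 * i + 1)

/-- The image `f_{k,\vec a}(S^k)` with `k = 2m`. -/
def imageOnVec (a : ℕ → ℕ) (m : ℕ) (S : Set ℝ) : Set ℝ :=
  {y | ∃ x : ℕ → ℝ, (∀ i, x i ∈ S) ∧ y = pairSumVec a m x}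

/-- `n''_* = ⌊-log_r ā⌋ + 1`. -/
noncomputable def nstar'' (r : ℝ) (abar : ℕ) : ℤ := ⌊-Real.logb r abar⌋ + 1

/-!
Setting one variable of each pair equal to `1`, the one with the larger exponent, leaves a sum of
`m = k / 2` powers `x_i ^ e_i` with `1 ≤ e_i ≤ E`, where `E = ⌊s/2⌋`. To reach `y ∈ [0, m]`, choose
for every summand an interval of the Cantor construction so that `y` lies between the sums of the
values at the left and at the right end points, and keep subdividing the interval whose image under
`x ↦ x ^ e_i` is longest: pass to its right part if this does not overshoot `y`, and to its left
part otherwise.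

The image of a left part can be far shorter than the other images, but a left part is chosen only
when `y` exceeds the sum of the left end points by a remainder `z` smaller than the distance between
the two left end points concerned, and the image of the left part is at least `(r / (1 - r)) ^ E`
times that distance. Hence every image is always at least `(r / (1 - r)) ^ E` times the minimum of
`z` and `1 - r` times the longest image, and `m ≥ ((1 - r) / r) ^ E` images of length
`(r / (1 - r)) ^ E * z` suffice to cover `z`.
-/

open Finset Pointwise

section SplittingFamily

/-- The intervals `[u, a]` and `[b, w]` are comparable in length to `[u, w]`: both are at most
`θ` times as long, the right one is at least `ρ` times as long, and the left one is at least `c`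
times the distance `b - u` between the left end points. -/
structure IsSplit (c ρ θ u a b w : ℝ) : Prop where
  left_ge : c * (b - u) ≤ a - u
  right_ge : ρ * (w - u) ≤ w - b
  left_le : a - u ≤ θ * (w - u)
  right_le : w - b ≤ θ * (w - u)

/-- A family of intervals `[u, w]`, encoded as a relation between end points, every member of which
splits into two further members: an abstract form of the Cantor construction. -/
structure IsSplittingFamily (c ρ θ : ℝ) (G : ℝ → ℝ → Prop) : Prop where
  le {u w : ℝ} : G u w → u ≤ w
  exists_isSplit {u w : ℝ} : G u w → ∃ a b, G u a ∧ G b w ∧ IsSplit c ρ θ u a b w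

/-- A choice of one interval `[u i, w i]` from each family `G i`, such that `y` lies in the sum of
the intervals and no interval is too short compared with both the remainder `y - ∑ u i` and the
other intervals. -/
structure IsBalancedBox {ι : Type*} (c ρ y : ℝ) (G : ι → ℝ → ℝ → Prop) (s : Finset ι)
    (u w : ι → ℝ) : Prop where
  mem : ∀ i ∈ s, G i (u i) (w i)
  lower : ∑ i ∈ s, u i ≤ y
  upper : y ≤ ∑ i ∈ s, w i
  balanced : ∀ i ∈ s, ∀ j ∈ s,
    c * min (y - ∑ i ∈ s, u i) ((1 - ρ) * (w i - u i)) ≤ w j - u j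

variable {ι : Type*} {c ρ θ y : ℝ} {G : ι → ℝ → ℝ → Prop} {s : Finset ι} {u w : ι → ℝ}

theorem sum_update_eq_sum_add_sub {M : Type*} [AddCommGroup M] [DecidableEq ι] {i : ι} (hi : i ∈ s)
    (f : ι → M) (x : M) : ∑ j ∈ s, Function.update f i x j = ∑ j ∈ s, f j + (x - f i) := by
  rw [sum_update_of_mem hi, sum_eq_add_sum_sdiff_singleton_of_mem hi f]
  abel

theorem IsBalancedBox.left [DecidableEq ι] (h : IsBalancedBox c ρ y G s u w) {i : ι} (hi : i ∈ s)
    {a b : ℝ} (ha : G i (u i) a) (hab : IsSplit c ρ θ (u i) a b (w i)) (hc : 0 ≤ c)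
    (hcard : 1 ≤ c * #s) (hy : y - ∑ j ∈ s, u j < b - u i) :
    IsBalancedBox c ρ y G s u (Function.update w i a) := by
  set z := y - ∑ j ∈ s, u j
  have hz : 0 ≤ z := sub_nonneg.2 h.lower
  have hmin : min z ((1 - ρ) * (w i - u i)) = z :=
    min_eq_left (by linarith [hab.right_ge])
  have hlength : ∀ j, j ∈ s → c * z ≤ Function.update w i a j - u j :=
    (Function.forall_update_iff w fun j x => j ∈ s → c * z ≤ x - u j).2
      ⟨fun _ => (mul_le_mul_of_nonneg_left hy.le hc).trans hab.left_ge,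
        fun j _ hj => hmin ▸ h.balanced i hi j hj⟩
  refine ⟨?_, h.lower, ?_, fun _ _ j hj => ?_⟩
  · exact (Function.forall_update_iff w fun j x => j ∈ s → G j (u j) x).2
      ⟨fun _ => ha, fun j _ => h.mem j⟩
  · have hcover : z ≤ ∑ j ∈ s, Function.update w i a j - ∑ j ∈ s, u j := calc
      z ≤ c * #s * z := le_mul_of_one_le_left hz hcard
      _ = #s • (c * z) := by rw [nsmul_eq_mul]; ring
      _ ≤ ∑ j ∈ s, (Function.update w i a j - u j) := card_nsmul_le_sum _ _ _ hlength
      _ = _ := sum_sub_distrib ..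
    exact (sub_le_sub_iff_right _).1 hcover
  · exact (mul_le_mul_of_nonneg_left (min_le_left _ _) hc).trans (hlength j hj)

theorem IsBalancedBox.right [DecidableEq ι] (h : IsBalancedBox c ρ y G s u w) {i : ι} (hi : i ∈ s)
    {a b : ℝ} (hb : G i b (w i)) (hab : IsSplit c ρ θ (u i) a b (w i)) (hc : 0 ≤ c)
    (hρ : ρ ≤ 1) (hcρ : c * (1 - ρ) ≤ ρ) (hub : u i ≤ b) (hbw : b ≤ w i)
    (hmax : ∀ j ∈ s, w j - u j ≤ w i - u i) (hy : b - u i ≤ y - ∑ j ∈ s, u j) :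
    IsBalancedBox c ρ y G s (Function.update u i b) w := by
  have hsum := sum_update_eq_sum_add_sub hi u b
  have hlength : ∀ j, j ∈ s → w j - Function.update u i b j ≤ w i - u i :=
    (Function.forall_update_iff u fun j x => j ∈ s → w j - x ≤ w i - u i).2
      ⟨fun _ => by linarith, fun j _ => hmax j⟩
  refine ⟨?_, by linarith, h.upper, fun j hj j' hj' => ?_⟩
  · exact (Function.forall_update_iff u fun j x => j ∈ s → G j x (w j)).2
      ⟨fun _ => hb, fun j _ => h.mem j⟩
  · have hmin : min (y - ∑ k ∈ s, Function.update u i b k)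
        ((1 - ρ) * (w j - Function.update u i b j)) ≤
        min (y - ∑ k ∈ s, u k) ((1 - ρ) * (w i - u i)) :=
      min_le_min (by linarith) (mul_le_mul_of_nonneg_left (hlength j hj) (sub_nonneg.2 hρ))
    refine (mul_le_mul_of_nonneg_left hmin hc).trans ?_
    have hright : c * min (y - ∑ k ∈ s, u k) ((1 - ρ) * (w i - u i)) ≤ w i - b := calc
      _ ≤ c * ((1 - ρ) * (w i - u i)) := mul_le_mul_of_nonneg_left (min_le_right _ _) hc
      _ = c * (1 - ρ) * (w i - u i) := by ring
      _ ≤ ρ * (w i - u i) := mul_le_mul_of_nonneg_right hcρ (by linarith)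
      _ ≤ w i - b := hab.right_ge
    exact (Function.forall_update_iff u fun k x => k ∈ s →
      c * min (y - ∑ k ∈ s, u k) ((1 - ρ) * (w i - u i)) ≤ w k - x).2
      ⟨fun _ => hright, fun k _ => h.balanced i hi k⟩ j' hj'

theorem IsBalancedBox.exists_length_le_mul (h : IsBalancedBox c ρ y G s u w)
    (hG : ∀ i ∈ s, IsSplittingFamily c ρ θ (G i)) (hs : s.Nonempty) (hc : 0 ≤ c) (hρ : ρ ≤ 1)
    (hθ : θ ≤ 1) (hcρ : c * (1 - ρ) ≤ ρ) (hcard : 1 ≤ c * #s) :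
    ∃ u' w', IsBalancedBox c ρ y G s u' w' ∧
      ∑ i ∈ s, w' i - ∑ i ∈ s, u' i ≤ (1 - (1 - θ) / #s) * (∑ i ∈ s, w i - ∑ i ∈ s, u i) := by
  classical
  obtain ⟨i, hi, hmax⟩ := exists_max_image s (fun j => w j - u j) hs
  obtain ⟨a, b, ha, hb, hab⟩ := (hG i hi).exists_isSplit (h.mem i hi)
  have hcard_pos : (0 : ℝ) < #s := by exact_mod_cast hs.card_pos
  have hdecay : (1 - θ) / #s * (∑ j ∈ s, w j - ∑ j ∈ s, u j) ≤ (1 - θ) * (w i - u i) := calc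
    _ ≤ (1 - θ) / #s * (#s * (w i - u i)) := by
      refine mul_le_mul_of_nonneg_left ?_ (div_nonneg (sub_nonneg.2 hθ) hcard_pos.le)
      rw [← sum_sub_distrib, ← nsmul_eq_mul]
      exact sum_le_card_nsmul _ _ _ hmax
    _ = (1 - θ) * (w i - u i) := by field_simp
  rcases lt_or_ge (y - ∑ j ∈ s, u j) (b - u i) with hy | hy
  · refine ⟨u, Function.update w i a, h.left hi ha hab hc hcard hy, ?_⟩
    rw [sum_update_eq_sum_add_sub hi]
    linarith [hab.left_le]
  · have hlength : θ * (w i - u i) ≤ w i - u i :=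
      mul_le_of_le_one_left (sub_nonneg.2 ((hG i hi).le (h.mem i hi))) hθ
    refine ⟨Function.update u i b, w, h.right hi hb hab hc hρ hcρ
      (by linarith [hab.right_le]) ((hG i hi).le hb) hmax hy, ?_⟩
    rw [sum_update_eq_sum_add_sub hi]
    linarith [hab.right_le]

theorem IsBalancedBox.exists_length_le_pow_mul (h : IsBalancedBox c ρ y G s u w)
    (hG : ∀ i ∈ s, IsSplittingFamily c ρ θ (G i)) (hs : s.Nonempty) (hc : 0 ≤ c) (hρ : ρ ≤ 1)
    (hθ0 : 0 ≤ θ) (hθ : θ ≤ 1) (hcρ : c * (1 - ρ) ≤ ρ) (hcard : 1 ≤ c * #s) (n : ℕ) :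
    ∃ u' w', IsBalancedBox c ρ y G s u' w' ∧
      ∑ i ∈ s, w' i - ∑ i ∈ s, u' i ≤
        (1 - (1 - θ) / #s) ^ n * (∑ i ∈ s, w i - ∑ i ∈ s, u i) := by
  have hratio : (1 - θ) / #s ≤ 1 :=
    div_le_one_of_le₀ (by linarith [show (1 : ℝ) ≤ #s by exact_mod_cast hs.card_pos])
      (Nat.cast_nonneg _)
  induction n with
  | zero => exact ⟨u, w, h, by simp⟩
  | succ n ih =>
    obtain ⟨u₁, w₁, h₁, hlength₁⟩ := ih
    obtain ⟨u₂, w₂, h₂, hlength₂⟩ := h₁.exists_length_le_mul hG hs hc hρ hθ hcρ hcard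
    refine ⟨u₂, w₂, h₂, hlength₂.trans ?_⟩
    rw [pow_succ', mul_assoc]
    exact mul_le_mul_of_nonneg_left hlength₁ (sub_nonneg.2 hratio)

theorem IsBalancedBox.mem_sum (h : IsBalancedBox c ρ y G s u w)
    (hG : ∀ i ∈ s, IsSplittingFamily c ρ θ (G i)) (hc : 0 ≤ c) (hρ : ρ ≤ 1)
    (hθ0 : 0 ≤ θ) (hθ : θ < 1) (hcρ : c * (1 - ρ) ≤ ρ) (hcard : 1 ≤ c * #s) {K : ι → Set ℝ}
    (hK : ∀ i ∈ s, IsCompact (K i)) (hGK : ∀ i ∈ s, ∀ u w, G i u w → u ∈ K i) :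
    y ∈ ∑ i ∈ s, K i := by
  have hs : s.Nonempty := by
    rw [nonempty_iff_ne_empty]
    rintro rfl
    norm_num at hcard
  have hcard_one : (1 : ℝ) ≤ #s := by exact_mod_cast hs.card_pos
  have hratio_pos : 0 < (1 - θ) / #s := div_pos (sub_pos.2 hθ) (by linarith)
  have hratio_le : (1 - θ) / #s ≤ 1 := div_le_one_of_le₀ (by linarith) (by linarith)
  choose u' w' hbox hlength using
    h.exists_length_le_pow_mul hG hs hc hρ hθ0 hθ.le hcρ hcard
  have hlim : Filter.Tendsto
      (fun n : ℕ => y - (1 - (1 - θ) / #s) ^ n * (∑ i ∈ s, w i - ∑ i ∈ s, u i))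
      Filter.atTop (nhds y) := by
    simpa using ((tendsto_pow_atTop_nhds_zero_of_lt_one (sub_nonneg.2 hratio_le)
      (by linarith)).mul_const (∑ i ∈ s, w i - ∑ i ∈ s, u i)).const_sub y
  have hlower : Filter.Tendsto (fun n => ∑ i ∈ s, u' n i) Filter.atTop (nhds y) :=
    tendsto_of_tendsto_of_tendsto_of_le_of_le hlim tendsto_const_nhds
      (fun n => by linarith [hlength n, (hbox n).upper]) fun n => (hbox n).lower
  have hcompact : IsCompact (∑ i ∈ s, K i) :=
    sum_induction K IsCompact (fun _ _ => IsCompact.add) isCompact_singleton hK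
  exact hcompact.isClosed.mem_of_tendsto hlower <| .of_forall fun n =>
    Set.finsetSum_mem_finsetSum _ _ _ fun i hi => hGK i hi _ _ ((hbox n).mem i hi)

theorem Icc_sum_subset_sum_of_isSplittingFamily (hG : ∀ i ∈ s, IsSplittingFamily c ρ θ (G i))
    (hc : 0 ≤ c) (hρ : ρ ≤ 1) (hθ0 : 0 ≤ θ) (hθ : θ < 1) (hcρ : c * (1 - ρ) ≤ ρ)
    (hcard : 1 ≤ c * #s) {K : ι → Set ℝ} (hK : ∀ i ∈ s, IsCompact (K i))
    (hGK : ∀ i ∈ s, ∀ u w, G i u w → u ∈ K i) (huw : ∀ i ∈ s, G i (u i) (w i))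
    (hbalanced : ∀ i ∈ s, ∀ j ∈ s, c * ((1 - ρ) * (w i - u i)) ≤ w j - u j) :
    Set.Icc (∑ i ∈ s, u i) (∑ i ∈ s, w i) ⊆ ∑ i ∈ s, K i := by
  rintro y ⟨hlower, hupper⟩
  have hbox : IsBalancedBox c ρ y G s u w := ⟨huw, hlower, hupper, fun i hi j hj =>
    (mul_le_mul_of_nonneg_left (min_le_right _ _) hc).trans (hbalanced i hi j hj)⟩
  exact hbox.mem_sum hG hc hρ hθ0 hθ hcρ hcard hK hGK

end SplittingFamily

section CantorSet

variable {r : ℝ}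

theorem isCompact_preCantorR (r : ℝ) (n : ℕ) : IsCompact (preCantorR r n) := by
  induction n with
  | zero => exact isCompact_Icc
  | succ n ih => exact (ih.image (by fun_prop)).union (ih.image (by fun_prop))

theorem cantorSetR_subset_Icc (r : ℝ) : cantorSetR r ⊆ Set.Icc 0 1 :=
  Set.iInter_subset (preCantorR r) 0

theorem isCompact_cantorSetR (r : ℝ) : IsCompact (cantorSetR r) :=
  isCompact_Icc.of_isClosed_subset
    (isClosed_iInter fun n => (isCompact_preCantorR r n).isClosed) (cantorSetR_subset_Icc r)

theorem zero_mem_cantorSetR (r : ℝ) : (0 : ℝ) ∈ cantorSetR r := by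
  refine Set.mem_iInter.2 fun n => ?_
  induction n with
  | zero => simp [preCantorR]
  | succ n ih => exact Or.inl ⟨0, ih, by simp⟩

theorem one_mem_cantorSetR (r : ℝ) : (1 : ℝ) ∈ cantorSetR r := by
  refine Set.mem_iInter.2 fun n => ?_
  induction n with
  | zero => simp [preCantorR]
  | succ n ih => exact Or.inr ⟨1, ih, by simp⟩

theorem mul_mem_cantorSetR (hr0 : 0 ≤ r) (hr1 : r ≤ 1) {x : ℝ} (hx : x ∈ cantorSetR r) :
    r * x ∈ cantorSetR r := by
  refine Set.mem_iInter.2 fun n => ?_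
  cases n with
  | zero =>
    obtain ⟨hx0, hx1⟩ := cantorSetR_subset_Icc r hx
    exact ⟨mul_nonneg hr0 hx0, mul_le_one₀ hr1 hx0 hx1⟩
  | succ n => exact Or.inl ⟨x, Set.mem_iInter.1 hx n, rfl⟩

theorem mul_add_one_sub_mem_cantorSetR (hr0 : 0 ≤ r) (hr1 : r ≤ 1) {x : ℝ}
    (hx : x ∈ cantorSetR r) : r * x + (1 - r) ∈ cantorSetR r := by
  refine Set.mem_iInter.2 fun n => ?_
  cases n with
  | zero =>
    obtain ⟨hx0, hx1⟩ := cantorSetR_subset_Icc r hx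
    exact ⟨add_nonneg (mul_nonneg hr0 hx0) (sub_nonneg.2 hr1),
      by linarith [mul_le_of_le_one_right hr0 hx1]⟩
  | succ n => exact Or.inr ⟨x, Set.mem_iInter.1 hx n, rfl⟩

/-- The interval `[p, q]` is one to which the whole Cantor set can be scaled down without leaving
the Cantor set, as is every interval arising in its construction. -/
structure IsCantorInterval (r p q : ℝ) : Prop where
  le : p ≤ q
  mapsTo : Set.MapsTo (fun t => p + t * (q - p)) (cantorSetR r) (cantorSetR r)

theorem isCantorInterval_zero_one (r : ℝ) : IsCantorInterval r 0 1 :=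
  ⟨zero_le_one, fun t ht => by simpa using ht⟩

theorem IsCantorInterval.left_mem {p q : ℝ} (h : IsCantorInterval r p q) : p ∈ cantorSetR r := by
  simpa using h.mapsTo (zero_mem_cantorSetR r)

theorem IsCantorInterval.left {p q : ℝ} (h : IsCantorInterval r p q) (hr0 : 0 ≤ r) (hr1 : r ≤ 1) :
    IsCantorInterval r p (p + r * (q - p)) := by
  refine ⟨le_add_of_nonneg_right (mul_nonneg hr0 (sub_nonneg.2 h.le)), fun t ht => ?_⟩
  convert h.mapsTo (mul_mem_cantorSetR hr0 hr1 ht) using 1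
  ring

theorem IsCantorInterval.right {p q : ℝ} (h : IsCantorInterval r p q) (hr0 : 0 ≤ r)
    (hr1 : r ≤ 1) : IsCantorInterval r (p + (1 - r) * (q - p)) q := by
  refine ⟨?_, fun t ht => ?_⟩
  · linarith [mul_nonneg hr0 (sub_nonneg.2 h.le)]
  · convert h.mapsTo (mul_add_one_sub_mem_cantorSetR hr0 hr1 ht) using 1
    ring

end CantorSet

section Powers

theorem add_pow_sub_pow_le_add_pow_sub_pow {x y h : ℝ} (hx : 0 ≤ x) (hxy : x ≤ y) (hh : 0 ≤ h)
    (e : ℕ) : (x + h) ^ e - x ^ e ≤ (y + h) ^ e - y ^ e := by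
  simp only [add_pow, sum_range_succ, Nat.sub_self, pow_zero, Nat.choose_self, Nat.cast_one,
    mul_one, add_sub_cancel_right]
  gcongr

theorem pow_mul_pow_sub_pow_le {p q t : ℝ} (hp : 0 ≤ p) (hpq : p ≤ q) (ht0 : 0 ≤ t) (ht1 : t ≤ 1)
    (e : ℕ) : t ^ e * (q ^ e - p ^ e) ≤ (p + t * (q - p)) ^ e - p ^ e := calc
  t ^ e * (q ^ e - p ^ e) = (t * p + t * (q - p)) ^ e - (t * p) ^ e := by
    rw [← mul_add, add_sub_cancel, mul_pow, mul_pow, mul_sub]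
  _ ≤ (p + t * (q - p)) ^ e - p ^ e :=
    add_pow_sub_pow_le_add_pow_sub_pow (mul_nonneg ht0 hp) (mul_le_of_le_one_left hp ht1)
      (mul_nonneg ht0 (sub_nonneg.2 hpq)) e

theorem add_mul_sub_pow_sub_pow_le {p q t : ℝ} (hp : 0 ≤ p) (hq : 0 ≤ q) (ht0 : 0 ≤ t)
    (ht1 : t ≤ 1) (e : ℕ) : (p + t * (q - p)) ^ e - p ^ e ≤ t * (q ^ e - p ^ e) := by
  have hconvex : ((1 - t) * p + t * q) ^ e ≤ (1 - t) * p ^ e + t * q ^ e :=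
    (convexOn_pow e).2 hp hq (sub_nonneg.2 ht1) ht0 (sub_add_cancel 1 t)
  rw [show p + t * (q - p) = (1 - t) * p + t * q by ring]
  linarith

theorem isSplit_pow {r p q : ℝ} {e E : ℕ} (hr0 : 0 < r) (hr : r ≤ 1 / 2) (he : e ∈ Set.Icc 1 E)
    (hp : 0 ≤ p) (hpq : p ≤ q) :
    IsSplit ((r / (1 - r)) ^ E) r (1 - r ^ E) (p ^ e) ((p + r * (q - p)) ^ e)
      ((p + (1 - r) * (q - p)) ^ e) (q ^ e) := by
  have hs : 0 < 1 - r := by linarith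
  have hratio0 : 0 ≤ r / (1 - r) := div_nonneg hr0.le hs.le
  have hratio1 : r / (1 - r) ≤ 1 := (div_le_one hs).2 (by linarith)
  have hq : 0 ≤ q := hp.trans hpq
  have hlength : 0 ≤ q ^ e - p ^ e := sub_nonneg.2 (pow_le_pow_left₀ hp hpq e)
  have hright : p ≤ p + (1 - r) * (q - p) :=
    le_add_of_nonneg_right (mul_nonneg hs.le (sub_nonneg.2 hpq))
  have hoffset := add_mul_sub_pow_sub_pow_le hp hq hs.le (by linarith) e
  have hleft := add_mul_sub_pow_sub_pow_le hp hq hr0.le (by linarith) e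
  constructor
  · calc (r / (1 - r)) ^ E * ((p + (1 - r) * (q - p)) ^ e - p ^ e)
        ≤ (r / (1 - r)) ^ e * ((p + (1 - r) * (q - p)) ^ e - p ^ e) :=
          mul_le_mul_of_nonneg_right (pow_le_pow_of_le_one hratio0 hratio1 he.2)
            (sub_nonneg.2 (pow_le_pow_left₀ hp hright e))
      _ ≤ (p + r / (1 - r) * (p + (1 - r) * (q - p) - p)) ^ e - p ^ e :=
          pow_mul_pow_sub_pow_le hp hright hratio0 hratio1 e
      _ = (p + r * (q - p)) ^ e - p ^ e := by
          rw [add_sub_cancel_left, ← mul_assoc, div_mul_cancel₀ _ hs.ne']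
  · linarith
  · have hpow : r ^ E ≤ r := pow_le_of_le_one hr0.le (by linarith)
      (Nat.one_le_iff_ne_zero.1 (he.1.trans he.2))
    exact hleft.trans (mul_le_mul_of_nonneg_right (by linarith) hlength)
  · have hpow : r ^ E ≤ (1 - r) ^ e := calc
      r ^ E ≤ r ^ e := pow_le_pow_of_le_one hr0.le (by linarith) he.2
      _ ≤ (1 - r) ^ e := pow_le_pow_left₀ hr0.le (by linarith) e
    linarith [pow_mul_pow_sub_pow_le hp hpq hs.le (by linarith) e,
      mul_le_mul_of_nonneg_right hpow hlength]

/-- The interval `[u, w]` is the image under `x ↦ x ^ e` of an interval of the Cantor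
construction. -/
def IsCantorPowInterval (r : ℝ) (e : ℕ) (u w : ℝ) : Prop :=
  ∃ p q, IsCantorInterval r p q ∧ p ^ e = u ∧ q ^ e = w

theorem isSplittingFamily_isCantorPowInterval {r : ℝ} {e E : ℕ} (hr0 : 0 < r) (hr : r ≤ 1 / 2)
    (he : e ∈ Set.Icc 1 E) :
    IsSplittingFamily ((r / (1 - r)) ^ E) r (1 - r ^ E) (IsCantorPowInterval r e) where
  le := by
    rintro _ _ ⟨p, q, h, rfl, rfl⟩
    exact pow_le_pow_left₀ (cantorSetR_subset_Icc r h.left_mem).1 h.le e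
  exists_isSplit := by
    rintro _ _ ⟨p, q, h, rfl, rfl⟩
    have hr1 : r ≤ 1 := by linarith
    exact ⟨_, _, ⟨_, _, h.left hr0.le hr1, rfl, rfl⟩, ⟨_, _, h.right hr0.le hr1, rfl, rfl⟩,
      isSplit_pow hr0 hr he (cantorSetR_subset_Icc r h.left_mem).1 h.le⟩

theorem Icc_subset_sum_image_pow_cantorSetR {ι : Type*} {s : Finset ι} {r : ℝ} {e : ι → ℕ} {E : ℕ}
    (hr0 : 0 < r) (hr : r ≤ 1 / 2) (he : ∀ i ∈ s, e i ∈ Set.Icc 1 E)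
    (hcard : ((1 - r) / r) ^ E ≤ #s) :
    Set.Icc (0 : ℝ) #s ⊆ ∑ i ∈ s, (fun x => x ^ e i) '' cantorSetR r := by
  have hs : 0 < 1 - r := by linarith
  have hratio0 : 0 ≤ r / (1 - r) := div_nonneg hr0.le hs.le
  have hratio1 : r / (1 - r) ≤ 1 := (div_le_one hs).2 (by linarith)
  obtain ⟨i, hi⟩ : s.Nonempty :=
    card_pos.1 (by exact_mod_cast (pow_pos (div_pos hs hr0) E).trans_le hcard)
  have hE : E ≠ 0 := Nat.one_le_iff_ne_zero.1 ((he i hi).1.trans (he i hi).2)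
  have hratio : (r / (1 - r)) ^ E * (1 - r) ≤ r := calc
    _ ≤ r / (1 - r) * (1 - r) :=
      mul_le_mul_of_nonneg_right (pow_le_of_le_one hratio0 hratio1 hE) hs.le
    _ = r := div_mul_cancel₀ _ hs.ne'
  have hcard' : 1 ≤ (r / (1 - r)) ^ E * #s := calc
    1 = (r / (1 - r)) ^ E * ((1 - r) / r) ^ E := by
      rw [← mul_pow, div_mul_div_cancel₀ hs.ne', div_self hr0.ne', one_pow]
    _ ≤ _ := mul_le_mul_of_nonneg_left hcard (pow_nonneg hratio0 E)
  have hsubset := Icc_sum_subset_sum_of_isSplittingFamily (u := fun _ => 0) (w := fun _ => 1)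
    (fun i hi => isSplittingFamily_isCantorPowInterval hr0 hr (he i hi)) (pow_nonneg hratio0 E)
    (by linarith) (sub_nonneg.2 (pow_le_one₀ hr0.le (by linarith)))
    (sub_lt_self 1 (pow_pos hr0 E)) hratio hcard'
    (fun i _ => (isCompact_cantorSetR r).image (continuous_pow (e i)))
    (fun i _ _ _ ⟨p, _, h, hp, _⟩ => ⟨p, h.left_mem, hp⟩)
    (fun i hi => ⟨0, 1, isCantorInterval_zero_one r,
      zero_pow (Nat.one_le_iff_ne_zero.1 (he i hi).1), one_pow _⟩)
    (fun _ _ _ _ => by linarith)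
  simpa using hsubset

end Powers

section PairSums

theorem imageOnVec_subset_Icc {S : Set ℝ} (hS : S ⊆ Set.Icc 0 1) (a : ℕ → ℕ) (m : ℕ) :
    imageOnVec a m S ⊆ Set.Icc (0 : ℝ) m := by
  rintro _ ⟨x, hx, rfl⟩
  have hpow (i n : ℕ) : x i ^ n ∈ Set.Icc (0 : ℝ) 1 :=
    ⟨pow_nonneg (hS (hx i)).1 n, pow_le_one₀ (hS (hx i)).1 (hS (hx i)).2⟩
  constructor
  · exact sum_nonneg fun i _ => mul_nonneg (hpow _ _).1 (hpow _ _).1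
  · simpa [pairSumVec] using sum_le_card_nsmul (range m) _ (1 : ℝ) fun i _ =>
      mul_le_one₀ (hpow (2 * i) _).2 (hpow (2 * i + 1) _).1 (hpow (2 * i + 1) _).2

theorem sum_image_pow_mul_image_pow_subset_imageOnVec {S : Set ℝ} (hS : S.Nonempty) (a : ℕ → ℕ)
    (m : ℕ) :
    ∑ i ∈ range m, (fun x => x ^ a (2 * i)) '' S * (fun x => x ^ a (2 * i + 1)) '' S ⊆
      imageOnVec a m S := by
  intro y hy
  obtain ⟨g, hg, rfl⟩ := (Set.mem_finsetSum _ _ _).1 hy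
  have hfactor (i : ℕ) : ∃ p ∈ S, ∃ q ∈ S,
      i ∈ range m → p ^ a (2 * i) * q ^ a (2 * i + 1) = g i := by
    by_cases hi : i ∈ range m
    · obtain ⟨_, ⟨p, hp, rfl⟩, _, ⟨q, hq, rfl⟩, hpq⟩ := hg hi
      exact ⟨p, hp, q, hq, fun _ => hpq⟩
    · obtain ⟨p, hp⟩ := hS
      exact ⟨p, hp, p, hp, fun h => absurd h hi⟩
  choose p hp q hq hpq using hfactor
  refine ⟨fun n => if Even n then p (n / 2) else q (n / 2), fun n => ?_,
    sum_congr rfl fun i hi => ?_⟩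
  · dsimp only
    split_ifs
    exacts [hp _, hq _]
  · have hodd : (2 * i + 1) / 2 = i := by omega
    simp [hodd, hpq i hi]

end PairSums

theorem one_sub_one_div_div_two_mem_Ioo {α : ℝ} (hα : 1 < α) :
    (1 - 1 / α) / 2 ∈ Set.Ioo (0 : ℝ) (1 / 2) := by
  have hinv0 : 0 < 1 / α := by positivity
  have hinv1 : 1 / α < 1 := (div_lt_one (by linarith)).2 hα
  constructor <;> linarith

theorem mem_Icc_or_mem_Icc_of_add_eq {p q s : ℕ} (hp : 0 < p) (hq : 0 < q)
    (hs : p + q = s) : p ∈ Set.Icc 1 (s / 2) ∨ q ∈ Set.Icc 1 (s / 2) := by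
  simp only [Set.mem_Icc]
  omega

theorem stmt_16_general {r : ℝ} (hr0 : 0 < r) (hr : r ≤ 1 / 2) {a : ℕ → ℕ} {m E : ℕ}
    (ha : ∀ i < m, a (2 * i) ∈ Set.Icc 1 E ∨ a (2 * i + 1) ∈ Set.Icc 1 E)
    (hm : ((1 - r) / r) ^ E ≤ m) :
    Set.Icc (0 : ℝ) m = imageOnVec a m (cantorSetR r) := by
  refine Set.Subset.antisymm ?_ (imageOnVec_subset_Icc (cantorSetR_subset_Icc r) a m)
  have hexponent (i : ℕ) :
      ∃ e, (i < m → e ∈ Set.Icc 1 E) ∧ (e = a (2 * i) ∨ e = a (2 * i + 1)) := by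
    by_cases h : a (2 * i) ∈ Set.Icc 1 E
    · exact ⟨_, fun _ => h, .inl rfl⟩
    · exact ⟨_, fun hi => (ha i hi).resolve_left h, .inr rfl⟩
  choose e he hea using hexponent
  have hone (n : ℕ) : (1 : ℝ) ∈ (fun x => x ^ n) '' cantorSetR r :=
    ⟨1, one_mem_cantorSetR r, one_pow n⟩
  calc Set.Icc (0 : ℝ) m ⊆ ∑ i ∈ range m, (fun x => x ^ e i) '' cantorSetR r := by
        simpa using Icc_subset_sum_image_pow_cantorSetR (s := range m) hr0 hr
          (fun i hi => he i (mem_range.1 hi)) (by simpa using hm)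
    _ ⊆ ∑ i ∈ range m, (fun x => x ^ a (2 * i)) '' cantorSetR r *
          (fun x => x ^ a (2 * i + 1)) '' cantorSetR r := by
        refine Set.finsetSum_subset_finsetSum _ _ _ fun i _ => ?_
        rcases hea i with h | h <;> rw [h]
        exacts [Set.subset_mul_left _ (hone _), Set.subset_mul_right _ (hone _)]
    _ ⊆ imageOnVec a m (cantorSetR r) :=
        sum_image_pow_mul_image_pow_subset_imageOnVec ⟨1, one_mem_cantorSetR r⟩ a m

/-- Main theorem: with `ā = ⌊s/2⌋`, `b̄ = s - ā`, for any exponents `a_i` with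
`a_{2i-1} + a_{2i} = s` and `k` even and large enough, `[0, k/2] = f_{k,\vec a}(C_α^k)`. -/
theorem stmt_16 (α r : ℝ) (hα : 1 < α) (hr : r = (1 - 1/α) / 2)
    (s : ℕ) (hs : 2 ≤ s) (k : ℕ) (hk : Even k) (hkpos : 0 < k)
    (a : ℕ → ℕ) (hapos : ∀ i < k, 0 < a i)
    (hasum : ∀ i < k / 2, a (2 * i) + a (2 * i + 1) = s)
    (hkge : (k : ℝ) ≥
      max (max
        ((⌈2 * ((1 - r + r ^ nstar'' r (s / 2)) ^ (s / 2 - 1) *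
              (((s - s / 2 : ℕ) : ℝ) * (1 - r + r ^ nstar'' r (s / 2)) + ((s / 2 : ℕ) : ℝ))) /
            ((1 - r) ^ (s / 2 - 1) * (1 - r ^ nstar'' r (s / 2)) ^ (s - s / 2 - 1) *
              (((s - s / 2 : ℕ) : ℝ) * (1 - r) +
                ((s / 2 : ℕ) : ℝ) * (1 - r ^ nstar'' r (s / 2)))) + 2⌉ : ℤ) *
          ((1 - r) / r) ^ (s / 2))
        (2 * ((1 - r) / r) ^ (s / 2 + 1)))
        (2 * (1 / (1 - r)) ^ (s - 1) + 2)) :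
    Set.Icc (0 : ℝ) ((k : ℝ) / 2) = imageOnVec a (k / 2) (cantorSetR r) := by
  obtain ⟨m, rfl⟩ := hk.two_dvd
  obtain ⟨hr0, hr1⟩ := one_sub_one_div_div_two_mem_Ioo hα
  rw [← hr] at hr0 hr1
  have hk_ge : 2 * ((1 - r) / r) ^ (s / 2 + 1) ≤ ((2 * m : ℕ) : ℝ) :=
    (le_max_right _ _).trans ((le_max_left _ _).trans hkge)
  have hpow : ((1 - r) / r) ^ (s / 2) ≤ ((1 - r) / r) ^ (s / 2 + 1) :=
    pow_le_pow_right₀ ((one_le_div hr0).2 (by linarith)) (Nat.le_succ _)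
  push_cast at hk_ge
  simpa using stmt_16_general hr0 hr1.le (fun i hi => mem_Icc_or_mem_Icc_of_add_eq
    (hapos _ (by omega)) (hapos _ (by omega)) (hasum i (by omega))) (by linarith)
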